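/- Let K be a compact Hausdorff space, X a uniformly convex complex Banach space, and S an X-valued function space over a uniform algebra on K with base algebra A := {x* ∘ f : f ∈ S, x* ∈ X*}, satisfying in addition A⊗X ⊆ S. Let Γ ⊆ K be a closed boundary for A in which the set of strong boundary points of A is dense (these properties hold for the Shilov boundary of A). If there exists a strong peak point for A that is a limit point of Γ (i.e., a point t₀ ∈ Γ such that every neighborhood of t₀ meets Γ∖{t₀}), then S has the convex diametral local diameter two property: the closed unit ball B_S equals the closed convex hull of the set of Δ-points of S. -/

import Mathlib

set_option maxHeartbeats 1000000
set_option synthInstance.maxHeartbeats 1000000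

/-- `t₀` is a strong boundary point for the algebra `A ⊆ C(K,ℂ)`. -/
def IsStrongBoundaryPoint {K : Type*} [TopologicalSpace K] [CompactSpace K]
    (A : Subalgebra ℂ C(K, ℂ)) (t₀ : K) : Prop :=
  ∀ U : Set K, IsOpen U → t₀ ∈ U →
    ∃ h ∈ A, h t₀ = 1 ∧ ‖h‖ = 1 ∧ ∃ c : ℝ, c < 1 ∧ ∀ t ∉ U, ‖h t‖ ≤ c

/-- `t₀` is a strong peak point for the algebra `A ⊆ C(K,ℂ)`: some `h ∈ A` satisfies
`|h t₀| = ‖h‖` and `‖h‖ > sup_{t ∈ K∖U} |h t|` for every open neighborhood `U` of `t₀`. -/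
def IsStrongPeakPoint {K : Type*} [TopologicalSpace K] [CompactSpace K]
    (A : Subalgebra ℂ C(K, ℂ)) (t₀ : K) : Prop :=
  ∃ h ∈ A, ‖h t₀‖ = ‖h‖ ∧
    ∀ U : Set K, IsOpen U → t₀ ∈ U → ∃ c : ℝ, c < ‖h‖ ∧ ∀ t ∉ U, ‖h t‖ ≤ c

/-!
For a small exponent `a > 0`, the map `z ↦ 1 - (1 - z) ^ a` sends the closed unit disc into the
Stolz region `‖z‖ + (1 - ε) * ‖1 - z‖ ≤ 1`, and it acts on the unit ball of a closed subalgebra `A`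
of `C(K, ℂ)`. Hence near each strong boundary point `t₀` there is a peak function `φ ∈ A` with
values in the Stolz region, and `φ u + (1 - ε) (1 - φ) f` stays in the unit ball of `S`, takes the
value `u` at `t₀`, and is close to `f` wherever `φ` is small.

Since `f t₀` is a convex combination of unit vectors `u`, this approximates `f` by convex
combinations of functions whose norm is attained at `t₀`. If `f` attains its norm at a limit `t₀`
of strong boundary points `s`, then replacing `f s` by `-f s` at `n` of them near `t₀`, on disjoint
neighborhoods, gives `n` functions at distance almost `2` from `f` whose average is within
`O(1 / n)` of `f`; so `f` is a Δ-point.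
-/

open Filter Topology

/-- A Δ-point of the unit sphere of a normed space: a unit vector lying, for each `ε > 0`, in the
closed convex hull of the points of the unit ball at distance at least `2 - ε` from it. -/
def IsDeltaPoint {E : Type*} [SeminormedAddCommGroup E] [Module ℝ E] (x : E) : Prop :=
  ‖x‖ = 1 ∧ ∀ ε > (0 : ℝ), x ∈ closure (convexHull ℝ {y : E | ‖y‖ ≤ 1 ∧ 2 - ε ≤ ‖x - y‖})

section StolzRegion

lemma norm_one_sub_add_le_one {ε c : ℝ} {v : ℂ} (hε : 0 < ε)
    (hre : c * ‖v‖ ≤ v.re) (hv : ‖v‖ * (ε * (2 - ε)) ≤ 2 * (c - (1 - ε))) :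
    ‖1 - v‖ + (1 - ε) * ‖v‖ ≤ 1 := by
  have hsq : ‖1 - v‖ ^ 2 = 1 - 2 * v.re + ‖v‖ ^ 2 := by
    rw [Complex.sq_norm, Complex.sq_norm, Complex.normSq_apply, Complex.normSq_apply]
    simp only [Complex.sub_re, Complex.sub_im, Complex.one_re, Complex.one_im]
    ring
  have hle : ‖1 - v‖ ^ 2 ≤ (1 - (1 - ε) * ‖v‖) ^ 2 := by
    have := mul_le_mul_of_nonneg_left hv (norm_nonneg v)
    rw [hsq]
    nlinarith
  have hnonneg : 0 ≤ 1 - (1 - ε) * ‖v‖ := by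
    rcases (norm_nonneg v).eq_or_lt with h0 | hpos
    · simp [← h0]
    have hc : c ≤ 1 := le_of_mul_le_mul_right (by linarith [Complex.re_le_norm v]) hpos
    have : ‖v‖ * (2 - ε) ≤ 2 := le_of_mul_le_mul_right (by linarith) hε
    nlinarith
  linarith [abs_le_of_sq_le_sq' hle hnonneg]

lemma eventually_norm_one_sub_cpow_add_le_one {ε R : ℝ} (hε : 0 < ε) (hε1 : ε ≤ 1) (hR : 0 < R) :
    ∀ᶠ a : ℝ in 𝓝[>] 0, ∀ w : ℂ, ‖w‖ ≤ R →
      ‖1 - w ^ (a : ℂ)‖ + (1 - ε) * ‖w ^ (a : ℂ)‖ ≤ 1 := by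
  have hsmall : ∀ᶠ a : ℝ in 𝓝 0,
      R ^ a * (ε * (2 - ε)) < 2 * (Real.cos (a * Real.pi) - (1 - ε)) := by
    refine ContinuousAt.eventually_lt ?_ (by fun_prop) ?_
    · exact (Real.continuousAt_const_rpow hR.ne').mul continuousAt_const
    · simp only [Real.rpow_zero, zero_mul, Real.cos_zero]
      nlinarith
  filter_upwards [nhdsWithin_le_nhds hsmall, self_mem_nhdsWithin,
    nhdsWithin_le_nhds (eventually_le_nhds one_pos)] with a ha (ha0 : 0 < a) ha1 w hw
  have hnorm : ‖w ^ (a : ℂ)‖ = ‖w‖ ^ a := Complex.norm_cpow_real w a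
  refine norm_one_sub_add_le_one (c := Real.cos (a * Real.pi)) hε ?_ ?_
  · have hcos : Real.cos (a * Real.pi) ≤ Real.cos (w.arg * a) := by
      rw [← Real.cos_abs (w.arg * a), abs_mul, abs_of_pos ha0, mul_comm |w.arg|]
      have := Complex.abs_arg_le_pi w
      exact Real.cos_le_cos_of_nonneg_of_le_pi (by positivity)
        (mul_le_of_le_one_left Real.pi_pos.le ha1) (by gcongr)
    rw [hnorm, Complex.cpow_ofReal_re, mul_comm]
    gcongr
  · rw [hnorm]
    refine le_trans ?_ ha.le
    have : 0 ≤ ε * (2 - ε) := mul_nonneg hε.le (by linarith)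
    gcongr

lemma diffContOnCl_one_sub_cpow {a : ℝ} (ha : 0 < a) :
    DiffContOnCl ℂ (fun z : ℂ ↦ (1 - z) ^ (a : ℂ)) (Metric.ball 0 1) := by
  constructor
  · refine DifferentiableOn.cpow_const (by fun_prop) fun z hz ↦ ?_
    rw [sub_eq_add_neg]
    exact Complex.mem_slitPlane_of_norm_lt_one (by simpa using hz)
  · rw [closure_ball 0 one_ne_zero]
    intro z hz
    have hre : 0 ≤ (1 - z).re := by
      have := (Complex.re_le_norm z).trans (mem_closedBall_zero_iff.1 hz)
      simpa using this
    have hpow : ContinuousAt (· ^ (a : ℂ)) (1 - z) :=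
      Complex.continuousAt_cpow_const_of_re_pos (.inl hre) (by simpa using ha)
    exact (ContinuousAt.comp' hpow (by fun_prop)).continuousWithinAt

end StolzRegion

section ClosedSubalgebra

variable {K : Type*} [TopologicalSpace K] [CompactSpace K] {A : Subalgebra ℂ C(K, ℂ)} {F : ℂ → ℂ}

lemma mem_of_hasFPowerSeriesOnBall (hA : IsClosed (A : Set C(K, ℂ)))
    {p : FormalMultilinearSeries ℂ ℂ ℂ} {r : ENNReal} (hF : HasFPowerSeriesOnBall F p 0 r)
    {h g : C(K, ℂ)} (hh : h ∈ A) (hr : ‖h‖ₑ < r) (hg : ∀ t, g t = F (h t)) : g ∈ A := by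
  obtain ⟨r', hhr', hr'⟩ := ENNReal.lt_iff_exists_nnreal_btwn.1 hr
  have hball (t : K) : h t ∈ Metric.ball (0 : ℂ) r' := by
    rw [enorm_eq_nnnorm, ENNReal.coe_lt_coe] at hhr'
    exact mem_ball_zero_iff.2 ((h.norm_coe_le_norm t).trans_lt hhr')
  have hsum (n : ℕ) (t : K) :
      (∑ k ∈ Finset.range n, p.coeff k • h ^ k) t = p.partialSum n (h t) := by
    simp [FormalMultilinearSeries.partialSum, mul_comm]
  have hlim : Tendsto (fun n ↦ ∑ k ∈ Finset.range n, p.coeff k • h ^ k) atTop (𝓝 g) := by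
    rw [ContinuousMap.tendsto_iff_tendstoUniformly]
    have := (hF.tendstoUniformlyOn hr').comp h
    rw [Set.preimage_eq_univ_iff.2 (Set.range_subset_iff.2 hball), tendstoUniformlyOn_univ] at this
    convert! this using 1
    · ext n t
      simp only [hsum, Function.comp_apply]
    · ext t
      simp only [hg, Function.comp_apply, zero_add]
  exact hA.mem_of_tendsto hlim <| .of_forall fun n ↦
    A.sum_mem fun k _ ↦ A.smul_mem (A.pow_mem hh k) _

lemma mem_of_diffContOnCl (hA : IsClosed (A : Set C(K, ℂ)))
    (hF : DiffContOnCl ℂ F (Metric.ball 0 1)) {h g : C(K, ℂ)} (hh : h ∈ A) (hh1 : ‖h‖ ≤ 1)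
    (hg : ∀ t, g t = F (h t)) : g ∈ A := by
  have hdisc (r : unitInterval) (t : K) : (r : ℂ) * h t ∈ Metric.closedBall (0 : ℂ) 1 := by
    rw [mem_closedBall_zero_iff, norm_mul, Complex.norm_real, Real.norm_of_nonneg r.2.1]
    exact mul_le_one₀ r.2.2 (norm_nonneg _) ((h.norm_coe_le_norm t).trans hh1)
  have hcont : Continuous fun x : unitInterval × K ↦ F (x.1 * h x.2) :=
    hF.continuousOn_ball.comp_continuous (by fun_prop) fun x ↦ hdisc x.1 x.2
  let G : C(unitInterval, C(K, ℂ)) := ContinuousMap.curry ⟨_, hcont⟩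
  have hGA : ∀ r < 1, G r ∈ A := by
    intro r hr
    refine mem_of_hasFPowerSeriesOnBall (h := (r : ℂ) • h) hA
      (DiffContOnCl.hasFPowerSeriesOnBall (R := 1) (by simpa using hF) one_pos)
      (A.smul_mem hh _) ?_ fun t ↦ rfl
    have hr1 : ‖(r : ℂ) • h‖ < 1 := by
      rw [norm_smul, Complex.norm_real, Real.norm_of_nonneg r.2.1]
      exact (mul_le_of_le_one_right r.2.1 hh1).trans_lt hr
    rw [← ofReal_norm]
    exact ENNReal.ofReal_lt_one.2 hr1
  have hG1 : G 1 = g := by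
    ext t
    simp [G, hg]
  have hclosure : closure (Set.Iio (1 : unitInterval)) = Set.Iic 1 :=
    closure_Iio' ⟨0, Set.mem_Iio.2 zero_lt_one⟩
  have hmem : G 1 ∈ (A : Set C(K, ℂ)) :=
    closure_minimal (s := Set.Iio 1) hGA (hA.preimage G.continuous) <| by
      rw [hclosure]
      exact Set.self_mem_Iic
  rwa [hG1] at hmem

end ClosedSubalgebra

section PeakFunctions

variable {K : Type*} [TopologicalSpace K] {t₀ : K}

/-- A peak function at `t₀` with values in the Stolz region of aperture `ε` at the point `1`, and
of modulus at most `ε` off `U`. -/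
structure IsStolzPeak (φ : C(K, ℂ)) (t₀ : K) (U : Set K) (ε : ℝ) : Prop where
  apply_self : φ t₀ = 1
  norm_add_le_one : ∀ t, ‖φ t‖ + (1 - ε) * ‖1 - φ t‖ ≤ 1
  norm_le_off : ∀ t ∉ U, ‖φ t‖ ≤ ε

lemma IsStolzPeak.norm_le_one {φ : C(K, ℂ)} {U : Set K} {ε : ℝ} (hφ : IsStolzPeak φ t₀ U ε)
    (hε1 : ε ≤ 1) (t : K) : ‖φ t‖ ≤ 1 :=
  (le_add_of_nonneg_right (mul_nonneg (sub_nonneg.2 hε1) (norm_nonneg _))).trans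
    (hφ.norm_add_le_one t)

variable [CompactSpace K] {A : Subalgebra ℂ C(K, ℂ)}

lemma IsStrongPeakPoint.isStrongBoundaryPoint (ht₀ : IsStrongPeakPoint A t₀) :
    IsStrongBoundaryPoint A t₀ := by
  obtain ⟨h, hA, hh₀, hpeak⟩ := ht₀
  intro U hU htU
  obtain ⟨c, hc, hcU⟩ := hpeak U hU htU
  rcases (norm_nonneg h).eq_or_lt with h0 | hpos
  · have : Nonempty K := ⟨t₀⟩
    exact ⟨1, A.one_mem, rfl, norm_one, 0, one_pos, fun t ht ↦
      absurd ((norm_nonneg (h t)).trans (hcU t ht)) (by linarith)⟩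
  · refine ⟨(h t₀)⁻¹ • h, A.smul_mem hA _, ?_, ?_, c / ‖h‖, (div_lt_one hpos).2 hc, fun t ht ↦ ?_⟩
    · exact inv_mul_cancel₀ (norm_pos_iff.1 (hh₀ ▸ hpos))
    · rw [norm_smul, norm_inv, hh₀, inv_mul_cancel₀ hpos.ne']
    · rw [ContinuousMap.smul_apply, norm_smul, norm_inv, hh₀, div_eq_inv_mul]
      exact mul_le_mul_of_nonneg_left (hcU t ht) (by positivity)

lemma IsStrongBoundaryPoint.exists_norm_le_off (ht₀ : IsStrongBoundaryPoint A t₀) {U : Set K}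
    (hU : IsOpen U) (htU : t₀ ∈ U) {η : ℝ} (hη : 0 < η) :
    ∃ h ∈ A, h t₀ = 1 ∧ ‖h‖ ≤ 1 ∧ ∀ t ∉ U, ‖h t‖ ≤ η := by
  obtain ⟨h, hA, hh₀, hnorm, c, hc, hcU⟩ := ht₀ U hU htU
  obtain ⟨n, hn⟩ := exists_pow_lt_of_lt_one hη (max_lt hc zero_lt_one)
  refine ⟨h ^ n, A.pow_mem hA n, ?_, ?_, fun t ht ↦ ?_⟩
  · rw [ContinuousMap.pow_apply, hh₀, one_pow]
  · have : Nonempty K := ⟨t₀⟩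
    exact (norm_pow_le h n).trans (pow_le_one₀ (norm_nonneg _) hnorm.le)
  · rw [ContinuousMap.pow_apply, norm_pow]
    exact (pow_le_pow_left₀ (norm_nonneg _) ((hcU t ht).trans (le_max_left c 0)) n).trans hn.le

lemma IsStrongBoundaryPoint.exists_isStolzPeak (hA : IsClosed (A : Set C(K, ℂ)))
    (ht₀ : IsStrongBoundaryPoint A t₀) {U : Set K} (hU : IsOpen U) (htU : t₀ ∈ U)
    {ε : ℝ} (hε : 0 < ε) (hε1 : ε ≤ 1) : ∃ φ ∈ A, IsStolzPeak φ t₀ U ε := by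
  obtain ⟨a, hstolz, ha : 0 < a⟩ :=
    ((eventually_norm_one_sub_cpow_add_le_one hε hε1 two_pos).and self_mem_nhdsWithin).exists
  have hdisc := diffContOnCl_one_sub_cpow ha
  have hcont : ContinuousAt (fun z : ℂ ↦ 1 - (1 - z) ^ (a : ℂ)) 0 :=
    continuousAt_const.sub (hdisc.differentiableAt Metric.isOpen_ball (by simp)).continuousAt
  obtain ⟨η, hη, hsmall⟩ : ∃ η > 0, ∀ z : ℂ, ‖z‖ ≤ η → ‖1 - (1 - z) ^ (a : ℂ)‖ ≤ ε := by
    obtain ⟨δ, hδ, hδε⟩ := Metric.continuousAt_iff.1 hcont ε hε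
    refine ⟨δ / 2, half_pos hδ, fun z hz ↦ ?_⟩
    simpa using (hδε (x := z) (by rw [dist_zero_right]; linarith)).le
  obtain ⟨h, hhA, hh₀, hh1, hhU⟩ := ht₀.exists_norm_le_off hU htU hη
  have hht (t : K) : ‖h t‖ ≤ 1 := (h.norm_coe_le_norm t).trans hh1
  let ψ : C(K, ℂ) := ⟨fun t ↦ (1 - h t) ^ (a : ℂ),
    hdisc.continuousOn_ball.comp_continuous h.continuous fun t ↦ mem_closedBall_zero_iff.2 (hht t)⟩
  refine ⟨1 - ψ, A.sub_mem A.one_mem (mem_of_diffContOnCl hA hdisc hhA hh1 fun t ↦ rfl), ?_,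
    fun t ↦ ?_, fun t ht ↦ hsmall _ (hhU t ht)⟩
  · simp [ψ, hh₀, ha.ne']
  · have hw : ‖1 - h t‖ ≤ 2 := (norm_sub_le _ _).trans (by rw [norm_one]; linarith [hht t])
    simpa [ψ] using hstolz _ hw

end PeakFunctions

section PeakBlend

lemma sum_le_one_add_card_mul {ι α : Type*} {T : Finset ι} {U : ι → Set α}
    (hU : (T : Set ι).PairwiseDisjoint U) {a : ι → ℝ} {δ : ℝ} (hδ : 0 ≤ δ) {t : α}
    (ha1 : ∀ s ∈ T, a s ≤ 1) (haδ : ∀ s ∈ T, t ∉ U s → a s ≤ δ) :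
    ∑ s ∈ T, a s ≤ 1 + T.card * δ := by
  classical
  have hone : ∑ s ∈ T, (if t ∈ U s then 1 else 0 : ℝ) ≤ 1 := by
    rw [Finset.sum_boole]
    exact_mod_cast Finset.card_le_one.2 fun i hi j hj ↦ by
      rw [Finset.mem_filter] at hi hj
      exact hU.elim_set hi.1 hj.1 t hi.2 hj.2
  calc ∑ s ∈ T, a s ≤ ∑ s ∈ T, ((if t ∈ U s then 1 else 0) + δ) := by
        refine Finset.sum_le_sum fun s hs ↦ ?_
        split_ifs with hts
        · linarith [ha1 s hs]
        · linarith [haδ s hs hts]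
    _ ≤ 1 + T.card * δ := by
        rw [Finset.sum_add_distrib, Finset.sum_const, nsmul_eq_mul]
        gcongr

variable {K : Type*} [TopologicalSpace K] {X : Type*} [NormedAddCommGroup X] [NormedSpace ℂ X]
  {φ : C(K, ℂ)} {t₀ : K} {U : Set K} {ε : ℝ} {f : C(K, X)} {u : X}

/-- The modification `φ u + (1 - ε) (1 - φ) f` of `f`, which takes the value `u` where `φ = 1` and
is close to `f` where `φ` is small. -/
noncomputable def peakBlend (φ : C(K, ℂ)) (ε : ℝ) (f : C(K, X)) (u : X) : C(K, X) :=
  φ • ContinuousMap.const K u + (1 - ε) • (f - φ • f)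

lemma peakBlend_apply (φ : C(K, ℂ)) (ε : ℝ) (f : C(K, X)) (u : X) (t : K) :
    peakBlend φ ε f u t = φ t • u + (1 - ε) • ((1 - φ t) • f t) := by
  simp [peakBlend, sub_smul]

lemma peakBlend_smul_add_smul (φ : C(K, ℂ)) (ε : ℝ) (f : C(K, X)) (u v : X)
    {a b : ℝ} (hab : a + b = 1) :
    peakBlend φ ε f (a • u + b • v) = a • peakBlend φ ε f u + b • peakBlend φ ε f v := by
  obtain rfl : b = 1 - a := eq_sub_of_add_eq' hab
  ext t
  simp only [peakBlend_apply, ContinuousMap.add_apply, ContinuousMap.smul_apply]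
  module

lemma peakBlend_mem {S : Submodule ℂ C(K, X)} (hφf : φ • f ∈ S)
    (hφu : φ • ContinuousMap.const K u ∈ S) (hf : f ∈ S) : peakBlend φ ε f u ∈ S :=
  S.add_mem hφu (S.smul_of_tower_mem _ (S.sub_mem hf hφf))

lemma IsStolzPeak.peakBlend_apply_self (hφ : IsStolzPeak φ t₀ U ε) : peakBlend φ ε f u t₀ = u := by
  simp [peakBlend_apply, hφ.apply_self]

variable [CompactSpace K]

lemma IsStolzPeak.norm_peakBlend_le_one (hφ : IsStolzPeak φ t₀ U ε) (hε1 : ε ≤ 1) (hf : ‖f‖ ≤ 1)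
    (hu : ‖u‖ ≤ 1) : ‖peakBlend φ ε f u‖ ≤ 1 := by
  refine (ContinuousMap.norm_le _ zero_le_one).2 fun t ↦ ?_
  have hε' : 0 ≤ 1 - ε := sub_nonneg.2 hε1
  have hft : ‖f t‖ ≤ 1 := (f.norm_coe_le_norm t).trans hf
  calc ‖peakBlend φ ε f u t‖
      ≤ ‖φ t‖ * ‖u‖ + (1 - ε) * (‖1 - φ t‖ * ‖f t‖) := by
        rw [peakBlend_apply]
        refine (norm_add_le _ _).trans_eq ?_
        rw [norm_smul, norm_smul, norm_smul, Real.norm_of_nonneg hε']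
    _ ≤ ‖φ t‖ * 1 + (1 - ε) * (‖1 - φ t‖ * 1) := by gcongr
    _ ≤ 1 := by simpa only [mul_one] using hφ.norm_add_le_one t

lemma IsStolzPeak.norm_peakBlend_sub_le (hφ : IsStolzPeak φ t₀ U ε) (hε : 0 ≤ ε) (hε1 : ε ≤ 1)
    (hf : ‖f‖ ≤ 1) (u : X) (t : K) :
    ‖peakBlend φ ε f u t - f t‖ ≤ ‖φ t‖ * ‖u - f t‖ + 2 * ε := by
  have hft : ‖f t‖ ≤ 1 := (f.norm_coe_le_norm t).trans hf
  have hφt : ‖1 - φ t‖ ≤ 2 :=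
    (norm_sub_le _ _).trans (by rw [norm_one]; linarith [hφ.norm_le_one hε1 t])
  have hdiff : peakBlend φ ε f u t - f t = φ t • (u - f t) - ε • ((1 - φ t) • f t) := by
    rw [peakBlend_apply]
    module
  calc ‖peakBlend φ ε f u t - f t‖
      ≤ ‖φ t‖ * ‖u - f t‖ + ε * (‖1 - φ t‖ * ‖f t‖) := by
        rw [hdiff]
        refine (norm_sub_le _ _).trans_eq ?_
        rw [norm_smul, norm_smul, norm_smul, Real.norm_of_nonneg hε]
    _ ≤ ‖φ t‖ * ‖u - f t‖ + ε * (2 * 1) := by gcongr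
    _ = ‖φ t‖ * ‖u - f t‖ + 2 * ε := by ring

lemma IsStolzPeak.norm_peakBlend_sub_le_four_mul (hφ : IsStolzPeak φ t₀ U ε) (hε : 0 ≤ ε)
    (hε1 : ε ≤ 1) (hf : ‖f‖ ≤ 1) (hu : ‖u‖ ≤ 1) (huU : ∀ t ∈ U, ‖u - f t‖ ≤ ε) :
    ‖peakBlend φ ε f u - f‖ ≤ 4 * ε := by
  refine (ContinuousMap.norm_le _ (by positivity)).2 fun t ↦ ?_
  have hprod : ‖φ t‖ * ‖u - f t‖ ≤ 2 * ε := by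
    by_cases ht : t ∈ U
    · linarith [mul_le_mul (hφ.norm_le_one hε1 t) (huU t ht) (norm_nonneg _) zero_le_one]
    · have hdiff : ‖u - f t‖ ≤ 2 :=
        (norm_sub_le _ _).trans (by linarith [(f.norm_coe_le_norm t).trans hf])
      linarith [mul_le_mul (hφ.norm_le_off t ht) hdiff (norm_nonneg _) hε]
  rw [ContinuousMap.sub_apply]
  linarith [hφ.norm_peakBlend_sub_le hε hε1 hf u t]

lemma IsStolzPeak.two_mul_norm_le_norm_sub_peakBlend_neg (hφ : IsStolzPeak φ t₀ U ε) :
    2 * ‖f t₀‖ ≤ ‖f - peakBlend φ ε f (-f t₀)‖ := by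
  have hval : (f - peakBlend φ ε f (-f t₀)) t₀ = (2 : ℝ) • f t₀ := by
    rw [ContinuousMap.sub_apply, hφ.peakBlend_apply_self, sub_neg_eq_add, two_smul]
  simpa [hval, norm_smul] using (f - peakBlend φ ε f (-f t₀)).norm_coe_le_norm t₀

lemma norm_average_peakBlend_sub_le {T : Finset K} (hT : T.Nonempty) {U : K → Set K}
    (hU : (T : Set K).PairwiseDisjoint U) {φ : K → C(K, ℂ)} {u : K → X} (hε : 0 ≤ ε) (hε1 : ε ≤ 1)
    (hφ : ∀ s ∈ T, IsStolzPeak (φ s) s (U s) ε) (hf : ‖f‖ ≤ 1) (hu : ∀ s ∈ T, ‖u s‖ ≤ 1) :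
    ‖∑ s ∈ T, (T.card : ℝ)⁻¹ • peakBlend (φ s) ε f (u s) - f‖ ≤ 2 / T.card + 4 * ε := by
  have hn : (0 : ℝ) < T.card := by exact_mod_cast hT.card_pos
  have hdiff : ∑ s ∈ T, (T.card : ℝ)⁻¹ • peakBlend (φ s) ε f (u s) - f =
      ∑ s ∈ T, (T.card : ℝ)⁻¹ • (peakBlend (φ s) ε f (u s) - f) := by
    simp only [smul_sub, Finset.sum_sub_distrib, Finset.sum_const]
    rw [← Nat.cast_smul_eq_nsmul ℝ, smul_inv_smul₀ hn.ne']
  refine (ContinuousMap.norm_le _ (by positivity)).2 fun t ↦ ?_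
  have hft : ‖f t‖ ≤ 1 := (f.norm_coe_le_norm t).trans hf
  have hsum : ∑ s ∈ T, ‖φ s t‖ ≤ 1 + T.card * ε :=
    sum_le_one_add_card_mul hU hε (fun s hs ↦ (hφ s hs).norm_le_one hε1 t)
      fun s hs ↦ (hφ s hs).norm_le_off t
  calc ‖(∑ s ∈ T, (T.card : ℝ)⁻¹ • peakBlend (φ s) ε f (u s) - f) t‖
      = ‖∑ s ∈ T, (T.card : ℝ)⁻¹ • (peakBlend (φ s) ε f (u s) t - f t)‖ := by
        simp only [hdiff, ContinuousMap.sum_apply, ContinuousMap.smul_apply,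
          ContinuousMap.sub_apply]
    _ ≤ ∑ s ∈ T, (T.card : ℝ)⁻¹ * (‖φ s t‖ * 2 + 2 * ε) := by
        refine norm_sum_le_of_le _ fun s hs ↦ ?_
        rw [norm_smul, norm_inv, Real.norm_natCast]
        have hus : ‖u s - f t‖ ≤ 2 := (norm_sub_le _ _).trans (by linarith [hu s hs])
        gcongr
        exact ((hφ s hs).norm_peakBlend_sub_le hε hε1 hf _ t).trans (by gcongr)
    _ = (T.card : ℝ)⁻¹ * ((∑ s ∈ T, ‖φ s t‖) * 2) + 2 * ε := by
        rw [← Finset.mul_sum, Finset.sum_add_distrib, ← Finset.sum_mul, Finset.sum_const,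
          nsmul_eq_mul, mul_add, inv_mul_cancel_left₀ hn.ne']
    _ ≤ (T.card : ℝ)⁻¹ * ((1 + T.card * ε) * 2) + 2 * ε := by gcongr
    _ = 2 / T.card + 4 * ε := by field_simp; ring

end PeakBlend

section FunctionModule

variable {K : Type*} [TopologicalSpace K] [CompactSpace K]
  {X : Type*} [NormedAddCommGroup X] [NormedSpace ℂ X]
  {S : Submodule ℂ C(K, X)} {A : Subalgebra ℂ C(K, ℂ)} {t₀ : K}

lemma IsStrongBoundaryPoint.exists_isStolzPeak_peakBlend_mem (ht₀ : IsStrongBoundaryPoint A t₀)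
    (hA : IsClosed (A : Set C(K, ℂ))) (hmul : ∀ φ ∈ A, ∀ f ∈ S, φ • f ∈ S)
    (htensor : ∀ φ ∈ A, ∀ x : X, φ • ContinuousMap.const K x ∈ S) {U : Set K} (hU : IsOpen U)
    (htU : t₀ ∈ U) {ε : ℝ} (hε : 0 < ε) (hε1 : ε ≤ 1) :
    ∃ φ, IsStolzPeak φ t₀ U ε ∧ ∀ f ∈ S, ∀ u : X, peakBlend φ ε f u ∈ S := by
  obtain ⟨φ, hφA, hφ⟩ := ht₀.exists_isStolzPeak hA hU htU hε hε1
  exact ⟨φ, hφ, fun f hf u ↦ peakBlend_mem (hmul φ hφA f hf) (htensor φ hφA u) hf⟩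

variable (hA : IsClosed (A : Set C(K, ℂ))) (hmul : ∀ φ ∈ A, ∀ f ∈ S, φ • f ∈ S)
  (htensor : ∀ φ ∈ A, ∀ x : X, φ • ContinuousMap.const K x ∈ S)

include hA hmul htensor

lemma mem_closure_convexHull_setOf_le_norm_sub [T2Space K] {f : S} (hf : ‖f‖ ≤ 1) {r : ℝ}
    (hinf : {s | IsStrongBoundaryPoint A s ∧ r ≤ 2 * ‖f.1 s‖}.Infinite) :
    f ∈ closure (convexHull ℝ {g : S | ‖g‖ ≤ 1 ∧ r ≤ ‖f - g‖}) := by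
  refine Metric.mem_closure_iff.2 fun ρ hρ ↦ ?_
  obtain ⟨δ, hδ, hδ1, hδρ⟩ : ∃ δ > 0, δ ≤ 1 ∧ 4 * δ ≤ ρ / 2 :=
    ⟨min 1 (ρ / 8), by positivity, min_le_left _ _, by linarith [min_le_right 1 (ρ / 8)]⟩
  obtain ⟨n, hn⟩ := exists_nat_gt (2 / (ρ / 2))
  have hn0 : (0 : ℝ) < n := lt_trans (by positivity) hn
  obtain ⟨T, hTs, rfl⟩ := hinf.exists_subset_card_eq n
  obtain ⟨U, hU, hdisj⟩ := T.finite_toSet.t2_separation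
  have hneg (s : K) : ‖-f.1 s‖ ≤ 1 := (norm_neg _).trans_le ((f.1.norm_coe_le_norm s).trans hf)
  have hpeak : ∀ s ∈ T, ∃ φ, IsStolzPeak φ s (U s) δ ∧
      ∃ g : S, g.1 = peakBlend φ δ f.1 (-f.1 s) := fun s hs ↦ by
    obtain ⟨φ, hφ, hφS⟩ := (hTs hs).1.exists_isStolzPeak_peakBlend_mem hA hmul htensor
      (hU s).2 (hU s).1 hδ hδ1
    exact ⟨φ, hφ, ⟨_, hφS _ f.2 _⟩, rfl⟩
  choose! φ hφ g hg using hpeak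
  refine ⟨∑ s ∈ T, (T.card : ℝ)⁻¹ • g s, ?_, ?_⟩
  · refine (convex_convexHull ℝ _).sum_mem (fun _ _ ↦ by positivity) ?_ fun s hs ↦
      subset_convexHull ℝ _ ⟨?_, ?_⟩
    · rw [Finset.sum_const, nsmul_eq_mul, mul_inv_cancel₀ hn0.ne']
    · rw [Submodule.coe_norm, hg s hs]
      exact (hφ s hs).norm_peakBlend_le_one hδ1 hf (hneg s)
    · rw [Submodule.coe_norm, Submodule.coe_sub, hg s hs]
      exact (hTs hs).2.trans (hφ s hs).two_mul_norm_le_norm_sub_peakBlend_neg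
  · have hcoe : ((∑ s ∈ T, (T.card : ℝ)⁻¹ • g s : S) : C(K, X)) =
        ∑ s ∈ T, (T.card : ℝ)⁻¹ • peakBlend (φ s) δ f.1 (-f.1 s) := by
      rw [Submodule.coe_sum]
      exact Finset.sum_congr rfl fun s hs ↦ congrArg ((T.card : ℝ)⁻¹ • ·) (hg s hs)
    rw [dist_comm, dist_eq_norm, Submodule.coe_norm, Submodule.coe_sub, hcoe]
    calc _ ≤ 2 / T.card + 4 * δ :=
          norm_average_peakBlend_sub_le (Finset.card_pos.1 (by exact_mod_cast hn0)) hdisj hδ.le hδ1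
            hφ hf fun s _ ↦ hneg s
      _ < ρ := by linarith [(div_lt_comm₀ (half_pos hρ) hn0).1 hn]

lemma isDeltaPoint_of_norm_apply_eq_one [T2Space K]
    (hacc : AccPt t₀ (𝓟 {s | IsStrongBoundaryPoint A s})) {f : S} (hf : ‖f‖ ≤ 1)
    (hft₀ : ‖f.1 t₀‖ = 1) : IsDeltaPoint f := by
  refine ⟨hf.antisymm (hft₀ ▸ f.1.norm_coe_le_norm t₀), fun ε hε ↦ ?_⟩
  have hnhds : {s | 2 - ε < 2 * ‖f.1 s‖} ∈ 𝓝 t₀ :=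
    ContinuousAt.eventually_lt (by fun_prop) (by fun_prop) (by rw [hft₀]; linarith)
  exact mem_closure_convexHull_setOf_le_norm_sub hA hmul htensor hf <|
    (Set.Infinite.of_accPt (hacc.nhds_inter hnhds)).mono fun s hs ↦ ⟨hs.2, hs.1.le⟩

lemma closedBall_subset_closure_convexHull_norm_apply_eq_one [Nontrivial X]
    (ht₀ : IsStrongBoundaryPoint A t₀) :
    Metric.closedBall (0 : S) 1 ⊆ closure (convexHull ℝ {g : S | ‖g‖ ≤ 1 ∧ ‖g.1 t₀‖ = 1}) := by
  refine fun f hf ↦ Metric.mem_closure_iff.2 fun ρ hρ ↦ ?_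
  rw [mem_closedBall_zero_iff] at hf
  have hft (t : K) : ‖f.1 t‖ ≤ 1 := (f.1.norm_coe_le_norm t).trans hf
  obtain ⟨δ, hδ, hδ1, hδρ⟩ : ∃ δ > 0, δ ≤ 1 ∧ 4 * δ < ρ :=
    ⟨min 1 (ρ / 8), by positivity, min_le_left _ _, by linarith [min_le_right 1 (ρ / 8)]⟩
  obtain ⟨φ, hφ, hφS⟩ := ht₀.exists_isStolzPeak_peakBlend_mem hA hmul htensor
    (U := {t | ‖f.1 t₀ - f.1 t‖ < δ}) (isOpen_lt (by fun_prop) continuous_const)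
    (by simpa using hδ) hδ hδ1
  let B (u : X) : S := ⟨peakBlend φ δ f.1 u, hφS f.1 f.2 u⟩
  refine ⟨B (f.1 t₀), ?_, ?_⟩
  · have hconv : Convex ℝ (B ⁻¹' convexHull ℝ {g : S | ‖g‖ ≤ 1 ∧ ‖g.1 t₀‖ = 1}) := by
      intro u hu v hv a b ha hb hab
      have hB : B (a • u + b • v) = a • B u + b • B v :=
        Subtype.ext (peakBlend_smul_add_smul φ δ f.1 u v hab)
      rw [Set.mem_preimage, hB]
      exact convex_convexHull ℝ _ hu hv ha hb hab
    have hsphere : Metric.sphere (0 : X) 1 ⊆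
        B ⁻¹' convexHull ℝ {g : S | ‖g‖ ≤ 1 ∧ ‖g.1 t₀‖ = 1} := by
      intro u hu
      rw [mem_sphere_zero_iff_norm] at hu
      refine subset_convexHull ℝ _ ⟨hφ.norm_peakBlend_le_one hδ1 hf hu.le, ?_⟩
      rw [hφ.peakBlend_apply_self, hu]
    refine convexHull_min hsphere hconv ?_
    rw [convexHull_sphere_eq_closedBall 0 zero_le_one, mem_closedBall_zero_iff]
    exact hft t₀
  · rw [dist_comm, dist_eq_norm, Submodule.coe_norm]
    exact (hφ.norm_peakBlend_sub_le_four_mul hδ.le hδ1 hf (hft t₀) fun t ht ↦ le_of_lt ht).trans_lt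
      hδρ

lemma closedBall_eq_closure_convexHull_isDeltaPoint [T2Space K] [Nontrivial X]
    (ht₀ : IsStrongBoundaryPoint A t₀) (hacc : AccPt t₀ (𝓟 {s | IsStrongBoundaryPoint A s})) :
    Metric.closedBall (0 : S) 1 = closure (convexHull ℝ {f : S | IsDeltaPoint f}) := by
  refine subset_antisymm ?_ ?_
  · exact (closedBall_subset_closure_convexHull_norm_apply_eq_one hA hmul htensor ht₀).trans <|
      closure_mono <| convexHull_mono fun f hf ↦
        isDeltaPoint_of_norm_apply_eq_one hA hmul htensor hacc hf.1 hf.2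
  · refine closure_minimal (convexHull_min ?_ (convex_closedBall _ _)) Metric.isClosed_closedBall
    exact fun f hf ↦ mem_closedBall_zero_iff.2 hf.1.le

end FunctionModule

lemma accPt_of_subset_closure {α : Type*} [TopologicalSpace α] [T1Space α] {x : α} {s t : Set α}
    (hx : x ∈ closure (s \ {x})) (hst : s ⊆ closure t) : AccPt x (𝓟 t) := by
  rw [← mem_derivedSet, ← derivedSet_closure]
  exact (accPt_principal_iff_clusterPt.2 (mem_closure_iff_clusterPt.1 hx)).mono
    (principal_mono.2 hst)

theorem stmt_18_general {K : Type*} [TopologicalSpace K] [CompactSpace K] [T2Space K]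
    {X : Type*} [NormedAddCommGroup X] [NormedSpace ℂ X]
    (S : Submodule ℂ C(K, X)) (A : Subalgebra ℂ C(K, ℂ))
    (hAbase : (A : Set C(K, ℂ)) =
      {g : C(K, ℂ) | ∃ f ∈ S, ∃ φ : X →L[ℂ] ℂ, ∀ t : K, g t = φ (f t)})
    (hAclosed : IsClosed (A : Set C(K, ℂ)))
    (hmul : ∀ φ ∈ A, ∀ f ∈ S, φ • f ∈ S)
    (htensor : ∀ φ ∈ A, ∀ x : X, φ • ContinuousMap.const K x ∈ S)
    {t₀ : K} (ht₀ : IsStrongBoundaryPoint A t₀)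
    (hacc : AccPt t₀ (𝓟 {t | IsStrongBoundaryPoint A t})) :
    Metric.closedBall (0 : S) 1 = closure (convexHull ℝ {f : S | IsDeltaPoint f}) := by
  have : Nontrivial X := by
    obtain ⟨f, -, φ, hφ⟩ : (1 : C(K, ℂ)) ∈ {g : C(K, ℂ) | ∃ f ∈ S, ∃ φ : X →L[ℂ] ℂ,
      ∀ t : K, g t = φ (f t)} := hAbase ▸ A.one_mem
    refine nontrivial_of_ne (f t₀) 0 fun h0 ↦ ?_
    simpa [h0] using hφ t₀
  exact closedBall_eq_closure_convexHull_isDeltaPoint hAclosed hmul htensor ht₀ hacc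

/- STATEMENT 18: Let `X` be a uniformly convex complex Banach space and `S` an
`X`-valued function space over a uniform algebra on the compact Hausdorff space `K`
with base algebra `A = {x* ∘ f : f ∈ S, x* ∈ X*}`, satisfying `A ⊗ X ⊆ S`. Let `Γ`
be a closed boundary for `A` in which the strong boundary points of `A` are dense.
If some strong peak point for `A` is a limit point of `Γ`, then `S` has the convex
diametral local diameter two property: the closed unit ball of `S` is the closed
convex hull of the set of Δ-points of `S`. -/
theorem stmt_18 {K : Type*} [TopologicalSpace K] [CompactSpace K] [T2Space K]
    {X : Type*} [NormedAddCommGroup X] [NormedSpace ℂ X] [CompleteSpace X]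
    [UniformConvexSpace X]
    (S : Submodule ℂ C(K, X)) (hSclosed : IsClosed (S : Set C(K, X)))
    (A : Subalgebra ℂ C(K, ℂ))
    (hAbase : (A : Set C(K, ℂ)) =
      {g : C(K, ℂ) | ∃ f ∈ S, ∃ φ : X →L[ℂ] ℂ, ∀ t : K, g t = φ (f t)})
    (hAclosed : IsClosed (A : Set C(K, ℂ)))
    (hAsep : ∀ s t : K, s ≠ t → ∃ g ∈ A, g s ≠ g t)
    (hmul : ∀ φ ∈ A, ∀ f ∈ S, φ • f ∈ S)
    (htensor : ∀ φ ∈ A, ∀ x : X, φ • ContinuousMap.const K x ∈ S)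
    (Γ : Set K) (hΓclosed : IsClosed Γ)
    (hΓbd : ∀ g ∈ A, ∃ t ∈ Γ, ‖g t‖ = ‖g‖)
    (hΓdense : Γ ⊆ closure {t | t ∈ Γ ∧ IsStrongBoundaryPoint A t})
    (hpeak : ∃ t₀ ∈ Γ, IsStrongPeakPoint A t₀ ∧ t₀ ∈ closure (Γ \ {t₀})) :
    Metric.closedBall (0 : S) 1 =
      closure (convexHull ℝ
        {h : S | ‖h‖ = 1 ∧ ∀ ε > (0 : ℝ),
          h ∈ closure (convexHull ℝ {g : S | ‖g‖ ≤ 1 ∧ 2 - ε ≤ ‖h - g‖})}) := by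
  obtain ⟨t₀, -, hpeak, hlim⟩ := hpeak
  exact stmt_18_general S A hAbase hAclosed hmul htensor hpeak.isStrongBoundaryPoint
    (accPt_of_subset_closure hlim (hΓdense.trans (closure_mono fun _ ht ↦ ht.2)))
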